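/- The 26-point fully symmetric rule with weight 4π/21 at each of the six points (±1, 0, 0), (0, ±1, 0), (0, 0, ±1); weight 16π/105 at each of the twelve points whose coordinates are a permutation of (±1/√2, ±1/√2, 0); and weight 9π/70 at each of the eight points (±1/√3, ±1/√3, ±1/√3), is a cubature rule of degree 7 for U₃: for every polynomial p in three variables of total degree at most 7, ∫_{U₃} p dσ equals the corresponding weighted sum of the values of p at these 26 points. -/

import Mathlib

open MeasureTheory MvPolynomial

lemma aux_radial (n : ℕ) :
    ∫ x in Set.Ioi (0 : ℝ), x ^ n * Real.exp (-x ^ 2) = 1 / 2 * Real.Gamma ((n + 1) / 2) := by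
  rw [← integral_rpow_mul_exp_neg_rpow (p := 2) (q := n) two_pos
    (by have : (0 : ℝ) ≤ n := n.cast_nonneg
        linarith)]
  simp

lemma aux_gauss_even (k : ℕ) :
    ∫ x : ℝ, x ^ (2 * k) * Real.exp (-x ^ 2) = Real.Gamma (k + 1 / 2) := by
  have h := integral_comp_abs (f := fun x : ℝ => x ^ (2 * k) * Real.exp (-x ^ 2))
  simp only [pow_mul, sq_abs] at h
  simp only [pow_mul]
  rw [h]
  simp only [← pow_mul]
  rw [aux_radial]
  push_cast
  rw [show ((2 * (k : ℝ) + 1) / 2) = k + 1 / 2 by ring]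
  ring

lemma aux_gauss_odd (k : ℕ) (hk : Odd k) :
    ∫ x : ℝ, x ^ k * Real.exp (-x ^ 2) = 0 := by
  have h := integral_neg_eq_self (fun x : ℝ => x ^ k * Real.exp (-x ^ 2)) volume
  simp only [hk.neg_pow, neg_sq, neg_mul, integral_neg] at h
  linarith

lemma aux_prod (a : Fin 3 → ℕ) :
    ∫ x : EuclideanSpace ℝ (Fin 3), (∏ i, x i ^ a i) * Real.exp (-‖x‖ ^ 2) =
      ∏ i, ∫ x : ℝ, x ^ a i * Real.exp (-x ^ 2) := by
  rw [← integral_fintype_prod_volume_eq_prod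
    (f := fun i (x : ℝ) => x ^ a i * Real.exp (-x ^ 2)),
    ← (PiLp.volume_preserving_toLp (Fin 3)).integral_comp
      (MeasurableEquiv.toLp 2 (Fin 3 → ℝ)).measurableEmbedding]
  refine integral_congr_ae (.of_forall fun x => ?_)
  simp only [EuclideanSpace.norm_sq_eq, Finset.prod_mul_distrib, ← Real.exp_sum,
    Finset.sum_neg_distrib, Real.norm_eq_abs, sq_abs]

lemma aux_polar (a : Fin 3 → ℕ) :
    ∫ x : EuclideanSpace ℝ (Fin 3), (∏ i, x i ^ a i) * Real.exp (-‖x‖ ^ 2) =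
      (∫ v : Metric.sphere (0 : EuclideanSpace ℝ (Fin 3)) 1,
        (∏ i, (v : EuclideanSpace ℝ (Fin 3)) i ^ a i)
          ∂((volume : Measure (EuclideanSpace ℝ (Fin 3))).toSphere)) *
      ∫ x in Set.Ioi (0 : ℝ), x ^ ((∑ i, a i) + 2) * Real.exp (-x ^ 2) := by
  set E := EuclideanSpace ℝ (Fin 3)
  have hd : Module.finrank ℝ E - 1 = 2 := by simp [E]
  have h1 : ∫ x : E, (∏ i, x i ^ a i) * Real.exp (-‖x‖ ^ 2) =
      ∫ x : ({(0 : E)}ᶜ : Set E), (∏ i, x.1 i ^ a i) * Real.exp (-‖x.1‖ ^ 2)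
        ∂((volume : Measure E).comap (↑)) := by
    rw [integral_subtype_comap (measurableSet_singleton _).compl
      fun x : E ↦ (∏ i, x i ^ a i) * Real.exp (-‖x‖ ^ 2), restrict_compl_singleton]
  have h2 := (volume : Measure E).measurePreserving_homeomorphUnitSphereProd.integral_comp
    (Homeomorph.measurableEmbedding _)
    (fun y => (∏ i, y.1.1 i ^ a i) * ((y.2.1) ^ (∑ i, a i) * Real.exp (-y.2.1 ^ 2)))
  rw [integral_prod_mul (fun v : Metric.sphere (0 : E) 1 => ∏ i, v.1 i ^ a i)
    (fun r : Set.Ioi (0 : ℝ) => r.1 ^ (∑ i, a i) * Real.exp (-r.1 ^ 2)), hd] at h2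
  rw [h1]
  refine Eq.trans ?_ (h2.trans ?_)
  · refine integral_congr_ae (.of_forall fun x => ?_)
    have hx : ‖x.1‖ ≠ 0 := norm_ne_zero_iff.2 x.2
    have hk : ∀ i, (‖x.1‖⁻¹ • x.1).ofLp i = ‖x.1‖⁻¹ * x.1.ofLp i := fun i => rfl
    simp only [homeomorphUnitSphereProd_apply_fst_coe, homeomorphUnitSphereProd_apply_snd_coe,
      hk, mul_pow, Finset.prod_mul_distrib, Finset.prod_pow_eq_pow_sum]
    rw [inv_pow]
    field_simp
  · congr 1
    simp only [Measure.volumeIoiPow, ENNReal.ofReal]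
    rw [integral_withDensity_eq_integral_smul,
      integral_subtype_comap measurableSet_Ioi fun r : ℝ ↦ Real.toNNReal (r ^ 2) •
        (r ^ (∑ i, a i) * Real.exp (-r ^ 2)),
      setIntegral_congr_fun measurableSet_Ioi fun x hx ↦ ?_]
    · rw [NNReal.smul_def, Real.coe_toNNReal _ (sq_nonneg _), smul_eq_mul]
      ring
    · exact (measurable_subtype_coe.pow_const _).real_toNNReal

lemma aux_sphere (a : Fin 3 → ℕ) :
    (∫ v : Metric.sphere (0 : EuclideanSpace ℝ (Fin 3)) 1,
        (∏ i, (v : EuclideanSpace ℝ (Fin 3)) i ^ a i)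
          ∂((volume : Measure (EuclideanSpace ℝ (Fin 3))).toSphere)) *
      (1 / 2 * Real.Gamma (((∑ i, a i : ℕ) + 3) / 2)) =
      ∏ i, ∫ x : ℝ, x ^ a i * Real.exp (-x ^ 2) := by
  rw [← aux_prod, aux_polar, aux_radial]
  push_cast
  congr 4
  ring

lemma aux_sphere_odd (a : Fin 3 → ℕ) (i : Fin 3) (hi : Odd (a i)) :
    (∫ v : Metric.sphere (0 : EuclideanSpace ℝ (Fin 3)) 1,
        (∏ i, (v : EuclideanSpace ℝ (Fin 3)) i ^ a i)
          ∂((volume : Measure (EuclideanSpace ℝ (Fin 3))).toSphere)) = 0 := by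
  have h := aux_sphere a
  rw [Finset.prod_eq_zero (Finset.mem_univ i) (aux_gauss_odd _ hi)] at h
  have : 0 < Real.Gamma (((∑ i, a i : ℕ) + 3) / 2) := Real.Gamma_pos_of_pos (by positivity)
  exact (mul_eq_zero.1 h).resolve_right (by positivity)

lemma aux_sphere_even (b : Fin 3 → ℕ) :
    (∫ v : Metric.sphere (0 : EuclideanSpace ℝ (Fin 3)) 1,
        (∏ i, (v : EuclideanSpace ℝ (Fin 3)) i ^ (2 * b i))
          ∂((volume : Measure (EuclideanSpace ℝ (Fin 3))).toSphere)) *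
      (((2 * (∑ i, b i) + 1).doubleFactorial : ℕ) : ℝ) = 4 * Real.pi *
      ∏ i, (((2 * b i - 1).doubleFactorial : ℕ) : ℝ) := by
  have h := aux_sphere (fun i => 2 * b i)
  simp only [aux_gauss_even, Real.Gamma_nat_add_half, ← Finset.mul_sum] at h
  rw [show (((2 * ∑ i, b i : ℕ) : ℝ) + 3) / 2 = ((∑ i, b i + 1 : ℕ) : ℝ) + 1 / 2 by
    push_cast; ring, Real.Gamma_nat_add_half] at h
  rw [show 2 * (∑ i, b i + 1) - 1 = 2 * (∑ i, b i) + 1 by omega] at h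
  simp only [Finset.prod_div_distrib, Finset.prod_mul_distrib, Finset.prod_pow_eq_pow_sum,
    Finset.prod_const, Finset.card_univ, Fintype.card_fin] at h
  have hp : √Real.pi ^ 3 = √Real.pi * Real.pi := by
    rw [pow_succ, Real.sq_sqrt Real.pi_pos.le, mul_comm]
  rw [hp, pow_succ] at h
  have h0 : √Real.pi ≠ 0 := (Real.sqrt_pos.2 Real.pi_pos).ne'
  field_simp at h
  linarith

/-- The 26-point rule. -/
noncomputable def ruleSum (β ε : ℝ) (p : MvPolynomial (Fin 3) ℝ) : ℝ :=
      (4 * Real.pi / 21) *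
        (eval ![1, 0, 0] p +
          eval ![-1, 0, 0] p +
          eval ![0, 1, 0] p +
          eval ![0, -1, 0] p +
          eval ![0, 0, 1] p +
          eval ![0, 0, -1] p) +
      (16 * Real.pi / 105) *
        (eval ![0, β, β] p +
          eval ![0, β, -β] p +
          eval ![0, -β, β] p +
          eval ![0, -β, -β] p +
          eval ![β, 0, β] p +
          eval ![β, 0, -β] p +
          eval ![-β, 0, β] p +
          eval ![-β, 0, -β] p +
          eval ![β, β, 0] p +
          eval ![β, -β, 0] p +
          eval ![-β, β, 0] p +
          eval ![-β, -β, 0] p) +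
      (9 * Real.pi / 70) *
        (eval ![ε, ε, ε] p +
          eval ![ε, ε, -ε] p +
          eval ![ε, -ε, ε] p +
          eval ![ε, -ε, -ε] p +
          eval ![-ε, ε, ε] p +
          eval ![-ε, ε, -ε] p +
          eval ![-ε, -ε, ε] p +
          eval ![-ε, -ε, -ε] p)

lemma ruleSum_add (β ε : ℝ) (p q : MvPolynomial (Fin 3) ℝ) :
    ruleSum β ε (p + q) = ruleSum β ε p + ruleSum β ε q := by
  simp only [ruleSum, map_add]
  ring

lemma ruleSum_zero (β ε : ℝ) : ruleSum β ε 0 = 0 := by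
  simp [ruleSum]

lemma ruleSum_sum (β ε : ℝ) {ι : Type*} (s : Finset ι) (f : ι → MvPolynomial (Fin 3) ℝ) :
    ruleSum β ε (∑ i ∈ s, f i) = ∑ i ∈ s, ruleSum β ε (f i) := by
  classical
  induction s using Finset.induction_on with
  | empty => simp [ruleSum_zero]
  | insert i s hi ih => rw [Finset.sum_insert hi, Finset.sum_insert hi, ruleSum_add, ih]

lemma ruleSum_monomial_odd (β ε c : ℝ) (m : Fin 3 →₀ ℕ) (i : Fin 3) (hi : Odd (m i)) :
    ruleSum β ε (monomial m c) = 0 := by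
  have h0 : (0 : ℝ) ^ m i = 0 := zero_pow (by rintro h; simp [h] at hi)
  fin_cases i <;>
  · simp only [Fin.zero_eta, Fin.mk_one, Fin.reduceFinMk] at hi h0
    simp [ruleSum, eval_monomial, Finsupp.prod_fintype, Fin.prod_univ_three, hi.neg_pow, h0]
    try ring

lemma ruleSum_monomial_even (β ε c : ℝ) (hβ : β ^ 2 = 1 / 2) (hε : ε ^ 2 = 1 / 3)
    (m : Fin 3 →₀ ℕ) (b : Fin 3 → ℕ) (hm : ∀ i, m i = 2 * b i) :
    ruleSum β ε (monomial m c) = c * (Real.pi * (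
      8 / 21 * (0 ^ b 1 * 0 ^ b 2 + 0 ^ b 0 * 0 ^ b 2 + 0 ^ b 0 * 0 ^ b 1) +
      64 / 105 * (0 ^ b 0 * (1 / 2) ^ b 1 * (1 / 2) ^ b 2 + (1 / 2) ^ b 0 * 0 ^ b 1 * (1 / 2) ^ b 2
        + (1 / 2) ^ b 0 * (1 / 2) ^ b 1 * 0 ^ b 2) +
      36 / 35 * ((1 / 3) ^ b 0 * (1 / 3) ^ b 1 * (1 / 3) ^ b 2))) := by
  simp only [ruleSum, eval_monomial, Finsupp.prod_pow, Fin.prod_univ_three, hm, pow_mul,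
    Matrix.cons_val_zero, Matrix.cons_val_one, Matrix.cons_val, neg_sq, hβ, hε, one_pow,
    zero_pow (two_ne_zero)]
  ring

lemma aux_monomial (β ε c : ℝ) (hβ : β ^ 2 = 1 / 2) (hε : ε ^ 2 = 1 / 3)
    (m : Fin 3 →₀ ℕ) (hm : ∑ i, m i ≤ 7) :
    ∫ v : Metric.sphere (0 : EuclideanSpace ℝ (Fin 3)) 1,
        eval (fun i => (v : EuclideanSpace ℝ (Fin 3)) i) (monomial m c)
      ∂((volume : Measure (EuclideanSpace ℝ (Fin 3))).toSphere) =
    ruleSum β ε (monomial m c) := by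
  simp only [eval_monomial, Finsupp.prod_pow, integral_const_mul]
  by_cases h : ∃ i, Odd (m i)
  · obtain ⟨i, hi⟩ := h
    rw [ruleSum_monomial_odd _ _ _ _ i hi, aux_sphere_odd _ i hi, mul_zero]
  · simp only [not_exists, Nat.not_odd_iff_even, even_iff_two_dvd] at h
    choose b hb using h
    rw [ruleSum_monomial_even β ε c hβ hε m b hb]
    congr 1
    have hs := aux_sphere_even b
    simp only [hb]
    simp only [hb, ← Finset.mul_sum] at hm
    generalize (∫ v : Metric.sphere (0 : EuclideanSpace ℝ (Fin 3)) 1,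
        (∏ i, (v : EuclideanSpace ℝ (Fin 3)) i ^ (2 * b i))
          ∂((volume : Measure (EuclideanSpace ℝ (Fin 3))).toSphere)) = I at hs ⊢
    simp only [Fin.sum_univ_three, Fin.prod_univ_three] at hs hm
    generalize b 0 = x at *
    generalize b 1 = y at *
    generalize b 2 = z at *
    have hx : x ≤ 3 := by omega
    have hy : y ≤ 3 := by omega
    have hz : z ≤ 3 := by omega
    interval_cases x <;> interval_cases y <;> interval_cases z <;>
      first
      | omega
      | (simp [Nat.doubleFactorial] at hs
         norm_num
         linarith)

/-- The 26-point fully symmetric rule with weight `4π/21` at the six points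
`(±1,0,0), (0,±1,0), (0,0,±1)`; weight `16π/105` at the twelve points whose coordinates are a
permutation of `(±1/√2, ±1/√2, 0)`; and weight `9π/70` at the eight points
`(±1/√3, ±1/√3, ±1/√3)`, is a cubature rule of degree 7 for `U₃`. -/
theorem degree7_rule_26pt (β ε : ℝ) (hβ : β = 1 / Real.sqrt 2) (hε : ε = 1 / Real.sqrt 3)
    (p : MvPolynomial (Fin 3) ℝ) (hp : p.totalDegree ≤ 7) :
    ∫ v : Metric.sphere (0 : EuclideanSpace ℝ (Fin 3)) 1,
        eval (fun i => (v : EuclideanSpace ℝ (Fin 3)) i) p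
      ∂((volume : Measure (EuclideanSpace ℝ (Fin 3))).toSphere) =
      (4 * Real.pi / 21) *
        (eval ![1, 0, 0] p +
          eval ![-1, 0, 0] p +
          eval ![0, 1, 0] p +
          eval ![0, -1, 0] p +
          eval ![0, 0, 1] p +
          eval ![0, 0, -1] p) +
      (16 * Real.pi / 105) *
        (eval ![0, β, β] p +
          eval ![0, β, -β] p +
          eval ![0, -β, β] p +
          eval ![0, -β, -β] p +
          eval ![β, 0, β] p +
          eval ![β, 0, -β] p +
          eval ![-β, 0, β] p +
          eval ![-β, 0, -β] p +
          eval ![β, β, 0] p +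
          eval ![β, -β, 0] p +
          eval ![-β, β, 0] p +
          eval ![-β, -β, 0] p) +
      (9 * Real.pi / 70) *
        (eval ![ε, ε, ε] p +
          eval ![ε, ε, -ε] p +
          eval ![ε, -ε, ε] p +
          eval ![ε, -ε, -ε] p +
          eval ![-ε, ε, ε] p +
          eval ![-ε, ε, -ε] p +
          eval ![-ε, -ε, ε] p +
          eval ![-ε, -ε, -ε] p) := by
  have hβ2 : β ^ 2 = 1 / 2 := by rw [hβ, div_pow, Real.sq_sqrt (by norm_num)]; norm_num
  have hε2 : ε ^ 2 = 1 / 3 := by rw [hε, div_pow, Real.sq_sqrt (by norm_num)]; norm_num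
  change _ = ruleSum β ε p
  conv_rhs => rw [p.as_sum]
  conv_lhs => rw [p.as_sum]
  rw [ruleSum_sum]
  simp only [map_sum]
  rw [integral_finsetSum]
  · refine Finset.sum_congr rfl fun m hm => ?_
    refine aux_monomial β ε _ hβ2 hε2 m ?_
    have := (le_totalDegree hm).trans hp
    rwa [Finsupp.sum_fintype _ _ (fun _ => rfl)] at this
  · intro m _
    refine Continuous.integrable_of_hasCompactSupport ?_ (HasCompactSupport.of_compactSpace _)
    simp only [eval_monomial, Finsupp.prod_pow]
    fun_prop
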